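/- Let μₙ ∈ ℝ and κₙ, αₙ, βₙ > 0. For every probability measure Q on ℝ absolutely continuous with respect to Lebesgue measure, with density q such that q·log q is Lebesgue-integrable and ξ ↦ q(ξ)·ξ² is Lebesgue-integrable, the normal-gamma-posterior-averaged KL divergence satisfies ∫ KL(Q ‖ N(μ, λ^{−1})) dNG(μₙ, κₙ, αₙ, βₙ)(μ, λ) = KL(Q ‖ N(μₙ, βₙ/αₙ)) + (1/2)(1/κₙ + log αₙ − ψ(αₙ)), where ψ is the digamma function. -/

import Mathlib

open MeasureTheory ProbabilityTheory Real
open scoped ENNReal NNReal Classical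

/-- Kullback-Leibler divergence: `∫ log (dQ/dP) dQ` when `Q ≪ P` and the
log-likelihood ratio is integrable, `+∞` otherwise. -/
noncomputable def klDiv {Ω : Type*} [MeasurableSpace Ω] (Q P : Measure Ω) : ℝ≥0∞ :=
  if Q ≪ P ∧ Integrable (fun x => Real.log (Q.rnDeriv P x).toReal) Q
  then ENNReal.ofReal (∫ x, Real.log (Q.rnDeriv P x).toReal ∂Q)
  else ⊤

/-- The digamma function: derivative of `log ∘ Γ`. -/
noncomputable def digamma (x : ℝ) : ℝ := deriv (fun y => Real.log (Real.Gamma y)) x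

/-- Joint density of the normal-gamma distribution `NG(m, κ, α, β)` at `p = (μ, λ)`:
`N(μ | m, (κλ)⁻¹) · Gamma(λ | α, β)`. -/
noncomputable def normalGammaPDFReal (m κ α β : ℝ) (p : ℝ × ℝ) : ℝ :=
  gaussianPDFReal m (Real.toNNReal (κ * p.2)⁻¹) p.1 * gammaPDFReal α β p.2

/-- The normal-gamma distribution `NG(m, κ, α, β)` as a measure on `ℝ × ℝ`
(supported on `ℝ × (0, ∞)`). -/
noncomputable def normalGamma (m κ α β : ℝ) : Measure (ℝ × ℝ) :=
  MeasureTheory.volume.withDensity (fun p => ENNReal.ofReal (normalGammaPDFReal m κ α β p))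

open Set Filter Topology in
lemma aux_gamma_log {a : ℝ} (ha : 0 < a) :
    IntegrableOn (fun t : ℝ => t ^ (a - 1) * Real.exp (-t) * Real.log t) (Ioi 0) ∧
    ∫ t in Ioi (0 : ℝ), t ^ (a - 1) * Real.exp (-t) * Real.log t = Real.Gamma a * digamma a := by
  have key := mellin_hasDerivAt_of_isBigO_rpow (E := ℂ) (a := a + 1) (b := 0) (s := (a : ℂ))
    (f := fun x => (Real.exp (-x) : ℂ)) ?_ ?_ (by simp) ?_ (by simpa using ha)
  rotate_left
  · refine (Continuous.continuousOn ?_).locallyIntegrableOn measurableSet_Ioi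
    exact Complex.continuous_ofReal.comp (Real.continuous_exp.comp continuous_neg)
  · rw [← Asymptotics.isBigO_norm_left]
    simp_rw [Complex.norm_real, Asymptotics.isBigO_norm_left]
    simpa only [neg_one_mul] using (isLittleO_exp_neg_mul_rpow_atTop zero_lt_one _).isBigO
  · simp_rw [neg_zero, rpow_zero]
    refine Asymptotics.isBigO_const_of_tendsto (?_ : Tendsto _ _ (𝓝 (1 : ℂ))) one_ne_zero
    rw [(by simp : (1 : ℂ) = Real.exp (-0))]
    exact (Complex.continuous_ofReal.comp
      (Real.continuous_exp.comp continuous_neg)).continuousWithinAt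
  obtain ⟨hconv, hder⟩ := key
  have hcongr : ∀ t ∈ Ioi (0 : ℝ), (t : ℂ) ^ ((a : ℂ) - 1) • (Real.log t • (Real.exp (-t) : ℂ))
      = ((t ^ (a - 1) * Real.exp (-t) * Real.log t : ℝ) : ℂ) := by
    intro t ht
    have ht' : (0 : ℝ) < t := ht
    rw [smul_eq_mul, Complex.real_smul]
    push_cast [Complex.ofReal_cpow ht'.le]
    ring
  have hI : IntegrableOn (fun t : ℝ => ((t ^ (a - 1) * Real.exp (-t) * Real.log t : ℝ) : ℂ))
      (Ioi 0) := by
    refine IntegrableOn.congr_fun (f := fun t : ℝ => (t : ℂ) ^ ((a : ℂ) - 1) • (Real.log t • (Real.exp (-t) : ℂ))) hconv hcongr measurableSet_Ioi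
  have hI' : IntegrableOn (fun t : ℝ => t ^ (a - 1) * Real.exp (-t) * Real.log t) (Ioi 0) := by
    have := Integrable.re hI
    exact this
  refine ⟨hI', ?_⟩
  have hval : mellin (fun t : ℝ => Real.log t • (Real.exp (-t) : ℂ)) (a : ℂ)
      = ((∫ t in Ioi (0 : ℝ), t ^ (a - 1) * Real.exp (-t) * Real.log t : ℝ) : ℂ) := by
    rw [mellin, setIntegral_congr_fun measurableSet_Ioi hcongr]
    exact integral_ofReal
  rw [hval, ← Complex.GammaIntegral_eq_mellin] at hder
  have h1 := hder.real_of_complex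
  rw [Complex.ofReal_re] at h1
  have h2 : HasDerivAt Real.Gamma
      (∫ t in Ioi (0 : ℝ), t ^ (a - 1) * Real.exp (-t) * Real.log t) a := by
    refine h1.congr_of_eventuallyEq ?_
    filter_upwards [Ioi_mem_nhds ha] with x hx
    rw [← Complex.Gamma_eq_integral (by simpa using hx), Complex.Gamma_ofReal, Complex.ofReal_re]
  have hG : Real.Gamma a ≠ 0 := (Real.Gamma_pos_of_pos ha).ne'
  have h3 := h2.log hG
  rw [digamma, h3.deriv]
  field_simp

open Set in
lemma aux_gm_int {a r : ℝ} (ha : 0 < a) (hr : 0 < r) {f : ℝ → ℝ}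
    (hf : IntegrableOn (fun t : ℝ => t ^ (a - 1) * Real.exp (-(r * t)) * f t) (Ioi 0)) :
    Integrable f (gammaMeasure a r) ∧ ∫ t, f t ∂(gammaMeasure a r)
      = r ^ a / Real.Gamma a *
        ∫ t in Ioi (0 : ℝ), t ^ (a - 1) * Real.exp (-(r * t)) * f t := by
  have hm : AEMeasurable (gammaPDF a r) volume :=
    (measurable_gammaPDFReal a r).ennreal_ofReal.aemeasurable
  have hlt : ∀ᵐ x ∂(volume : Measure ℝ), gammaPDF a r x < ⊤ := by
    simp [gammaPDF]
  have hg : (fun x => (gammaPDF a r x).toReal • f x) =ᵐ[volume]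
      (Ioi (0:ℝ)).indicator (fun t : ℝ => r ^ a / Real.Gamma a *
        (t ^ (a - 1) * Real.exp (-(r * t)) * f t)) := by
    have h0 : ∀ᵐ x ∂(volume : Measure ℝ), x ≠ 0 := by
      simp [ae_iff, measure_singleton]
    filter_upwards [h0] with x hx
    rw [gammaPDF, ENNReal.toReal_ofReal (gammaPDFReal_nonneg ha hr x), gammaPDFReal]
    by_cases h : 0 < x
    · simp [h, h.le]; ring
    · have : ¬ 0 ≤ x := fun h' => h (lt_of_le_of_ne h' (Ne.symm hx))
      simp [h, this]
  constructor
  · rw [gammaMeasure, integrable_withDensity_iff_integrable_smul₀' hm hlt, integrable_congr hg,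
      integrable_indicator_iff measurableSet_Ioi]
    exact hf.const_mul _
  · rw [gammaMeasure, integral_withDensity_eq_integral_toReal_smul₀ hm hlt, integral_congr_ae hg,
      integral_indicator measurableSet_Ioi, integral_const_mul]

open Set in
lemma aux_gm_id {a r : ℝ} (ha : 0 < a) (hr : 0 < r) :
    Integrable (fun t => t) (gammaMeasure a r) ∧ ∫ t, t ∂(gammaMeasure a r) = a / r := by
  have hval := Real.integral_rpow_mul_exp_neg_mul_Ioi (a := a + 1) (by linarith) hr
  have hc : ∀ t ∈ Ioi (0 : ℝ), t ^ (a + 1 - 1) * Real.exp (-(r * t))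
      = t ^ (a - 1) * Real.exp (-(r * t)) * t := by
    intro t ht
    have ht' : (0 : ℝ) < t := ht
    have : t ^ (a + 1 - 1) = t ^ (a - 1) * t := by
      rw [← Real.rpow_add_one ht'.ne']; ring_nf
    rw [this]; ring
  rw [setIntegral_congr_fun measurableSet_Ioi hc] at hval
  have hpos : 0 < (1 / r) ^ (a + 1) * Real.Gamma (a + 1) :=
    mul_pos (by positivity) (Real.Gamma_pos_of_pos (by linarith))
  have hI : IntegrableOn (fun t : ℝ => t ^ (a - 1) * Real.exp (-(r * t)) * t) (Ioi 0) := by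
    by_contra h
    rw [integral_undef h] at hval
    linarith
  obtain ⟨h1, h2⟩ := aux_gm_int ha hr (f := fun t => t) hI
  refine ⟨h1, ?_⟩
  have hG : Real.Gamma a ≠ 0 := (Real.Gamma_pos_of_pos ha).ne'
  rw [h2, hval, Real.Gamma_add_one ha.ne', Real.rpow_add_one (by positivity), Real.div_rpow (by norm_num) hr.le,
    Real.one_rpow]
  have : r ^ a ≠ 0 := (Real.rpow_pos_of_pos hr a).ne'
  field_simp

open Set in
lemma aux_gm_log {a r : ℝ} (ha : 0 < a) (hr : 0 < r) :
    Integrable (fun t => Real.log t) (gammaMeasure a r) ∧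
      ∫ t, Real.log t ∂(gammaMeasure a r) = digamma a - Real.log r := by
  obtain ⟨hI, hv⟩ := aux_gamma_log ha
  have hI2 := (integrableOn_Ioi_comp_mul_left_iff
    (fun t : ℝ => t ^ (a - 1) * Real.exp (-t) * Real.log t) 0 hr).2 (by simpa using hI)
  have hv2 := integral_comp_mul_left_Ioi
    (fun t : ℝ => t ^ (a - 1) * Real.exp (-t) * Real.log t) 0 hr
  rw [mul_zero, hv] at hv2
  have hval := Real.integral_rpow_mul_exp_neg_mul_Ioi ha hr
  have hpos : 0 < (1 / r) ^ a * Real.Gamma a :=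
    mul_pos (by positivity) (Real.Gamma_pos_of_pos ha)
  have hI0 : IntegrableOn (fun t : ℝ => t ^ (a - 1) * Real.exp (-(r * t))) (Ioi 0) := by
    by_contra h
    rw [integral_undef h] at hval
    linarith
  have hrp : r ^ (a - 1) ≠ 0 := (Real.rpow_pos_of_pos hr _).ne'
  have hc : ∀ t ∈ Ioi (0 : ℝ),
      (r ^ (a - 1))⁻¹ * ((r * t) ^ (a - 1) * Real.exp (-(r * t)) * Real.log (r * t))
        - Real.log r * (t ^ (a - 1) * Real.exp (-(r * t)))
      = t ^ (a - 1) * Real.exp (-(r * t)) * Real.log t := by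
    intro t ht
    have ht' : (0 : ℝ) < t := ht
    rw [Real.mul_rpow hr.le ht'.le, Real.log_mul hr.ne' ht'.ne']
    field_simp
    ring
  have hIA : IntegrableOn (fun t : ℝ => (r ^ (a - 1))⁻¹ * ((r * t) ^ (a - 1) * Real.exp (-(r * t)) * Real.log (r * t))) (Ioi 0) := hI2.const_mul _
  have hIB : IntegrableOn (fun t : ℝ => Real.log r * (t ^ (a - 1) * Real.exp (-(r * t)))) (Ioi 0) := hI0.const_mul _
  have hIf := (hIA.sub hIB).congr_fun hc measurableSet_Ioi
  obtain ⟨h1, h2⟩ := aux_gm_int ha hr (f := fun t => Real.log t) hIf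
  refine ⟨h1, ?_⟩
  rw [h2, ← setIntegral_congr_fun measurableSet_Ioi hc, integral_sub hIA hIB, integral_const_mul,
    integral_const_mul, hv2, hval, Real.div_rpow (by norm_num) hr.le, Real.one_rpow, smul_eq_mul]
  have hG : Real.Gamma a ≠ 0 := (Real.Gamma_pos_of_pos ha).ne'
  have : r ^ a = r ^ (a - 1) * r := by
    rw [← Real.rpow_add_one hr.ne']; ring_nf
  rw [this]
  field_simp

/-- second-moment data of a Gaussian -/
lemma aux_gauss (m : ℝ) (v : ℝ≥0) (A B C : ℝ) :
    Integrable (fun x => A + B * x + C * x ^ 2) (gaussianReal m v) ∧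
    ∫ x, (A + B * x + C * x ^ 2) ∂(gaussianReal m v) = A + B * m + C * (m ^ 2 + v) := by
  have h2 : MemLp id 2 (gaussianReal m v) := memLp_id_gaussianReal 2
  have hi1 : Integrable (fun x : ℝ => x) (gaussianReal m v) := h2.integrable (by norm_num)
  have hi2 : Integrable (fun x : ℝ => x ^ 2) (gaussianReal m v) := h2.integrable_sq
  have hv : ∫ x, x ^ 2 ∂(gaussianReal m v) = m ^ 2 + v := by
    have := variance_eq_sub h2
    rw [variance_id_gaussianReal] at this
    simp only [id, Pi.pow_apply, integral_id_gaussianReal] at this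
    linarith
  have hA : Integrable (fun x : ℝ => A + B * x) (gaussianReal m v) :=
    (integrable_const A).add (hi1.const_mul B)
  refine ⟨hA.add (hi2.const_mul C), ?_⟩
  rw [integral_add hA (hi2.const_mul C), integral_add (integrable_const A) (hi1.const_mul B),
    integral_const_mul, integral_const_mul, hv, integral_id_gaussianReal]
  simp

lemma aux_ng_pos {m κ α β : ℝ} {p : ℝ × ℝ} (h : normalGammaPDFReal m κ α β p ≠ 0) : 0 < p.2 := by
  rcases lt_trichotomy p.2 0 with h' | h' | h'
  · exact absurd (by simp [normalGammaPDFReal, gammaPDFReal, not_le.2 h']) h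
  · exact absurd (by simp [normalGammaPDFReal, h']) h
  · exact h'

lemma aux_ng_meas (m κ α β : ℝ) : Measurable (normalGammaPDFReal m κ α β) := by
  unfold normalGammaPDFReal gaussianPDFReal
  have := measurable_gammaPDFReal α β
  fun_prop

lemma aux_ng_lintegral {m κ α β : ℝ} (hκ : 0 < κ) (K : ℝ × ℝ → ℝ≥0∞) (hK : Measurable K) :
    ∫⁻ p, K p ∂(normalGamma m κ α β) =
      ∫⁻ l, ∫⁻ x, K (x, l) ∂(gaussianReal m (Real.toNNReal (κ * l)⁻¹)) ∂(gammaMeasure α β) := by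
  have hgm : Measurable (gammaPDF α β) := (measurable_gammaPDFReal α β).ennreal_ofReal
  have hmm : Measurable (fun p => ENNReal.ofReal (normalGammaPDFReal m κ α β p)) :=
    (aux_ng_meas m κ α β).ennreal_ofReal
  rw [normalGamma, lintegral_withDensity_eq_lintegral_mul _ hmm hK, Measure.volume_eq_prod,
    lintegral_prod_symm _ (hmm.mul hK).aemeasurable, gammaMeasure,
    lintegral_withDensity_eq_lintegral_mul_non_measurable _ hgm (by simp [gammaPDF])]
  have h0 : ∀ᵐ x ∂(volume : Measure ℝ), x ≠ 0 := by
    simp [ae_iff, measure_singleton]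
  refine lintegral_congr_ae ?_
  filter_upwards [h0] with l hl
  rcases lt_or_gt_of_ne hl with h | h
  · simp [gammaPDF, normalGammaPDFReal, gammaPDFReal, not_le.2 h]
  · have hv : Real.toNNReal (κ * l)⁻¹ ≠ 0 := by
      rw [Ne, Real.toNNReal_eq_zero, not_le]; positivity
    have hKl : Measurable (fun x => K (x, l)) := by fun_prop
    simp only [Pi.mul_apply]
    rw [gaussianReal_of_var_ne_zero _ hv, lintegral_withDensity_eq_lintegral_mul _
      (measurable_gaussianPDF _ _) hKl, ← lintegral_const_mul _ ((measurable_gaussianPDF _ _).mul hKl)]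
    refine lintegral_congr fun x => ?_
    simp only [Pi.mul_apply, normalGammaPDFReal, gaussianPDF, gammaPDF]
    rw [ENNReal.ofReal_mul (gaussianPDFReal_nonneg _ _ _)]
    ring

lemma aux_kl (Q : Measure ℝ) [IsProbabilityMeasure Q]
    (q : ℝ → ℝ) (hq_nonneg : ∀ x, 0 ≤ q x)
    (hQ_density : Q = MeasureTheory.volume.withDensity (fun ξ => ENNReal.ofReal (q ξ)))
    (hint_entropy : Integrable (fun ξ => q ξ * Real.log (q ξ)))
    (hint_second_moment : Integrable (fun ξ => q ξ * ξ ^ 2)) :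
    ∃ H S1 S2 : ℝ, ∀ (m v : ℝ), 0 < v →
      0 ≤ H + Real.log v / 2 + (S2 - 2 * m * S1 + m ^ 2) / (2 * v) ∧
      klDiv Q (gaussianReal m (Real.toNNReal v)) =
        ENNReal.ofReal (H + Real.log v / 2 + (S2 - 2 * m * S1 + m ^ 2) / (2 * v)) := by
  have h0 : ∀ᵐ x ∂(volume : Measure ℝ), x ≠ 0 := by
    simp [ae_iff, measure_singleton]
  have hqm : AEMeasurable q volume := by
    have h1 : AEMeasurable (fun ξ => (q ξ * ξ ^ 2) * (ξ ^ 2)⁻¹) volume :=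
      hint_second_moment.aemeasurable.mul (by fun_prop)
    refine h1.congr ?_
    filter_upwards [h0] with x hx
    field_simp
  have hqm' : AEMeasurable (fun ξ => ENNReal.ofReal (q ξ)) volume := hqm.ennreal_ofReal
  have hlt : ∀ᵐ x ∂(volume : Measure ℝ), ENNReal.ofReal (q x) < ⊤ := by simp
  have hint : ∀ g : ℝ → ℝ, Integrable (fun ξ => q ξ * g ξ) → Integrable g Q := by
    intro g hg
    rw [hQ_density, integrable_withDensity_iff_integrable_smul₀' hqm' hlt]
    refine hg.congr (ae_of_all _ fun x => ?_)
    simp [ENNReal.toReal_ofReal (hq_nonneg x)]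
  have hIlog : Integrable (fun x => Real.log (q x)) Q := hint _ hint_entropy
  have hI2 : Integrable (fun x : ℝ => x ^ 2) Q := hint _ hint_second_moment
  have hmem : MemLp (fun x : ℝ => x) 2 Q :=
    (memLp_two_iff_integrable_sq (by fun_prop)).2 hI2
  have hI1 : Integrable (fun x : ℝ => x) Q := hmem.integrable (by norm_num)
  have hQvol : Q ≪ volume := by
    rw [hQ_density]; exact withDensity_absolutelyContinuous _ _
  have hqpos : ∀ᵐ x ∂Q, 0 < q x := by
    rw [hQ_density, ae_withDensity_iff' hqm']
    refine ae_of_all _ fun x hx => ?_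
    simpa using hx
  refine ⟨∫ x, Real.log (q x) ∂Q + Real.log (2 * π) / 2, ∫ x, x ∂Q, ∫ x, x ^ 2 ∂Q, ?_⟩
  intro m v hv
  have hv' : Real.toNNReal v ≠ 0 := by rw [Ne, Real.toNNReal_eq_zero, not_le]; exact hv
  have hac : Q ≪ gaussianReal m (Real.toNNReal v) :=
    hQvol.trans (gaussianReal_absolutelyContinuous' m hv')
  have hrn : Q.rnDeriv (gaussianReal m (Real.toNNReal v)) =ᵐ[volume]
      fun x => (gaussianPDF m (Real.toNNReal v) x)⁻¹ * ENNReal.ofReal (q x) := by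
    rw [gaussianReal_of_var_ne_zero _ hv']
    have h1 := Measure.rnDeriv_withDensity_right Q volume
      (measurable_gaussianPDF m (Real.toNNReal v)).aemeasurable
      (ae_of_all _ fun x => (gaussianPDF_pos m hv' x).ne')
      (ae_of_all _ fun x => by simp [gaussianPDF])
    have h2 : Q.rnDeriv volume =ᵐ[volume] fun ξ => ENNReal.ofReal (q ξ) := by
      rw [hQ_density]; exact Measure.rnDeriv_withDensity₀ _ hqm'
    filter_upwards [h1, h2] with x hx1 hx2
    rw [hx1, hx2]
  have hllr : (fun x => Real.log (Q.rnDeriv (gaussianReal m (Real.toNNReal v)) x).toReal) =ᵐ[Q]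
      fun x => Real.log (q x) + ((Real.log (2 * π) / 2 + Real.log v / 2 + m ^ 2 / (2 * v))
        + (-(m / v)) * x + (1 / (2 * v)) * x ^ 2) := by
    filter_upwards [hQvol.ae_le hrn, hqpos] with x hx hqx
    have hp := gaussianPDFReal_pos m _ x hv'
    rw [hx, gaussianPDF, ENNReal.toReal_mul, ENNReal.toReal_inv,
      ENNReal.toReal_ofReal hp.le, ENNReal.toReal_ofReal hqx.le,
      Real.log_mul (inv_ne_zero hp.ne') hqx.ne', Real.log_inv, gaussianPDFReal,
      Real.coe_toNNReal _ hv.le, Real.log_mul (by positivity) (Real.exp_pos _).ne', Real.log_exp,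
      Real.log_inv, Real.log_sqrt (by positivity), Real.log_mul (by positivity) hv.ne']
    field_simp
    ring
  have hJ : Integrable (fun x : ℝ => (Real.log (2 * π) / 2 + Real.log v / 2 + m ^ 2 / (2 * v))
        + (-(m / v)) * x) Q := (integrable_const _).add (hI1.const_mul _)
  have hJ2 : Integrable (fun x : ℝ => (Real.log (2 * π) / 2 + Real.log v / 2 + m ^ 2 / (2 * v))
        + (-(m / v)) * x + (1 / (2 * v)) * x ^ 2) Q := hJ.add (hI2.const_mul _)
  have hllrI : Integrable
      (fun x => Real.log (Q.rnDeriv (gaussianReal m (Real.toNNReal v)) x).toReal) Q :=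
    (integrable_congr hllr).2 (hIlog.add hJ2)
  have hval : ∫ x, Real.log (Q.rnDeriv (gaussianReal m (Real.toNNReal v)) x).toReal ∂Q
      = ∫ x, Real.log (q x) ∂Q + Real.log (2 * π) / 2 + Real.log v / 2
        + (∫ x, x ^ 2 ∂Q - 2 * m * ∫ x, x ∂Q + m ^ 2) / (2 * v) := by
    rw [integral_congr_ae hllr, integral_add hIlog hJ2, integral_add hJ (hI2.const_mul _),
      integral_add (integrable_const _) (hI1.const_mul _), integral_const_mul, integral_const_mul]
    simp only [integral_const, probReal_univ, one_smul]
    field_simp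
    ring
  constructor
  · have := InformationTheory.integral_llr_add_sub_measure_univ_nonneg hac hllrI
    simp only [probReal_univ, add_sub_cancel_right] at this
    rw [← hval]
    exact this
  · rw [klDiv, if_pos ⟨hac, hllrI⟩, hval]

theorem normalGamma_posterior_averaged_klDiv
    (μₙ κₙ αₙ βₙ : ℝ) (hκ : 0 < κₙ) (hα : 0 < αₙ) (hβ : 0 < βₙ)
    (Q : Measure ℝ) [IsProbabilityMeasure Q]
    (q : ℝ → ℝ) (hq_nonneg : ∀ x, 0 ≤ q x)
    (hQ_density : Q = MeasureTheory.volume.withDensity (fun ξ => ENNReal.ofReal (q ξ)))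
    (hint_entropy : Integrable (fun ξ => q ξ * Real.log (q ξ)))
    (hint_second_moment : Integrable (fun ξ => q ξ * ξ ^ 2)) :
    ((∫⁻ pr, klDiv Q (gaussianReal pr.1 (Real.toNNReal pr.2⁻¹))
        ∂(normalGamma μₙ κₙ αₙ βₙ) : ℝ≥0∞) : EReal)
      = ((klDiv Q (gaussianReal μₙ (Real.toNNReal (βₙ / αₙ))) : ℝ≥0∞) : EReal)
        + (((1 / 2) * (1 / κₙ + Real.log αₙ - digamma αₙ) : ℝ) : EReal) := by
  obtain ⟨H, S1, S2, hF⟩ := aux_kl Q q hq_nonneg hQ_density hint_entropy hint_second_moment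
  haveI := isProbabilityMeasure_gammaMeasure hα hβ
  obtain ⟨hFn, hFe⟩ := hF μₙ (βₙ / αₙ) (by positivity)
  set K : ℝ × ℝ → ℝ≥0∞ := fun p =>
    ENNReal.ofReal ((H - Real.log p.2 / 2 + S2 / 2 * p.2) + (-(S1 * p.2)) * p.1
      + (p.2 / 2) * p.1 ^ 2) with hKdef
  have hK : Measurable K := by rw [hKdef]; fun_prop
  have hF' : ∀ m l : ℝ, 0 < l →
      0 ≤ (H - Real.log l / 2 + S2 / 2 * l) + (-(S1 * l)) * m + (l / 2) * m ^ 2 ∧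
      klDiv Q (gaussianReal m (Real.toNNReal l⁻¹)) = K (m, l) := by
    intro m l hl
    obtain ⟨h1, h2⟩ := hF m l⁻¹ (by positivity)
    have he : H + Real.log l⁻¹ / 2 + (S2 - 2 * m * S1 + m ^ 2) / (2 * l⁻¹) =
        (H - Real.log l / 2 + S2 / 2 * l) + (-(S1 * l)) * m + (l / 2) * m ^ 2 := by
      rw [Real.log_inv]
      field_simp
      ring
    rw [he] at h1 h2
    exact ⟨h1, h2⟩
  have hmm : Measurable (fun p => ENNReal.ofReal (normalGammaPDFReal μₙ κₙ αₙ βₙ p)) :=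
    (aux_ng_meas μₙ κₙ αₙ βₙ).ennreal_ofReal
  have hstep1 : ∫⁻ pr, klDiv Q (gaussianReal pr.1 (Real.toNNReal pr.2⁻¹))
        ∂(normalGamma μₙ κₙ αₙ βₙ) = ∫⁻ pr, K pr ∂(normalGamma μₙ κₙ αₙ βₙ) := by
    refine lintegral_congr_ae ?_
    rw [normalGamma, Filter.EventuallyEq, ae_withDensity_iff hmm]
    refine ae_of_all _ fun p hp => ?_
    have hp2 : 0 < p.2 := aux_ng_pos (m := μₙ) (κ := κₙ) (α := αₙ) (β := βₙ) (p := p)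
      (fun h => hp (by simp [h]))
    exact (hF' p.1 p.2 hp2).2
  have hpos : ∀ᵐ l ∂(gammaMeasure αₙ βₙ), 0 < l := by
    rw [gammaMeasure, ae_withDensity_iff (f := gammaPDF αₙ βₙ)
      (measurable_gammaPDFReal αₙ βₙ).ennreal_ofReal]
    have h0 : ∀ᵐ x ∂(volume : Measure ℝ), x ≠ 0 := by
      simp [ae_iff, measure_singleton]
    filter_upwards [h0] with x hx hx2
    by_contra hneg
    exact hx2 (gammaPDF_of_neg (lt_of_le_of_ne (not_lt.1 hneg) hx))
  set G : ℝ → ℝ := fun l => (H + 1 / (2 * κₙ)) + (-(1 / 2)) * Real.log l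
    + ((S2 - 2 * μₙ * S1 + μₙ ^ 2) / 2) * l with hG
  have hinner : ∀ᵐ l ∂(gammaMeasure αₙ βₙ), 0 ≤ G l ∧
      ∫⁻ x, K (x, l) ∂(gaussianReal μₙ (Real.toNNReal (κₙ * l)⁻¹)) = ENNReal.ofReal (G l) := by
    filter_upwards [hpos] with l hl
    obtain ⟨hi, hv⟩ := aux_gauss μₙ (Real.toNNReal (κₙ * l)⁻¹)
      (H - Real.log l / 2 + S2 / 2 * l) (-(S1 * l)) (l / 2)
    have hv2 : G l = ∫ x, ((H - Real.log l / 2 + S2 / 2 * l) + (-(S1 * l)) * x + (l / 2) * x ^ 2)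
        ∂(gaussianReal μₙ (Real.toNNReal (κₙ * l)⁻¹)) := by
      rw [hv, Real.coe_toNNReal _ (by positivity), hG]
      field_simp
      ring
    rw [hv2]
    refine ⟨integral_nonneg fun x => (hF' x l hl).1, ?_⟩
    rw [ofReal_integral_eq_lintegral_ofReal hi (ae_of_all _ fun x => (hF' x l hl).1)]
  obtain ⟨hIid, hvid⟩ := aux_gm_id hα hβ
  obtain ⟨hIlog, hvlog⟩ := aux_gm_log hα hβ
  have hIA : Integrable (fun l => (H + 1 / (2 * κₙ)) + (-(1 / 2)) * Real.log l)
      (gammaMeasure αₙ βₙ) := (integrable_const _).add (hIlog.const_mul _)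
  have hIG : Integrable G (gammaMeasure αₙ βₙ) := hIA.add (hIid.const_mul _)
  have hGn : 0 ≤ ∫ l, G l ∂(gammaMeasure αₙ βₙ) :=
    integral_nonneg_of_ae (hinner.mono fun _ h => h.1)
  have hGv : ∫ l, G l ∂(gammaMeasure αₙ βₙ) =
      (H + Real.log (βₙ / αₙ) / 2 + (S2 - 2 * μₙ * S1 + μₙ ^ 2) / (2 * (βₙ / αₙ)))
        + (1 / 2) * (1 / κₙ + Real.log αₙ - digamma αₙ) := by
    rw [hG, integral_add hIA (hIid.const_mul _),
      integral_add (integrable_const _) (hIlog.const_mul _), integral_const_mul,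
      integral_const_mul, hvid, hvlog, Real.log_div hβ.ne' hα.ne']
    simp only [integral_const, probReal_univ, one_smul]
    field_simp
    ring
  rw [hstep1, aux_ng_lintegral hκ K hK, lintegral_congr_ae (hinner.mono fun _ h => h.2),
    ← ofReal_integral_eq_lintegral_ofReal hIG (hinner.mono fun _ h => h.1), hFe,
    EReal.coe_ennreal_ofReal, EReal.coe_ennreal_ofReal, max_eq_left hGn, max_eq_left hFn, hGv,
    EReal.coe_add]
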